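/- Let d ≥ 1, let p, q : ℝ^d → ℝ be everywhere positive and twice continuously differentiable, and let w : (0,∞) → ℝ be differentiable. Set r(x) = p(x)/q(x) and β(x) = ∇log p(x) − ∇log q(x). Let x ∈ ℝ^d satisfy β(x) ≠ 0 and w(r(x)) ≠ 0. Define the geometric compression index κ(x) = −div(q β)(x) / (q(x)·‖β(x)‖²) and the divergence elasticity η(s) = s·w'(s)/w(s). Then −div(q · (w ∘ r) · β)(x) = q(x) · w(r(x)) · ‖β(x)‖² · (κ(x) − η(r(x))). -/

import Mathlib

/-!
Write `F = q β` and `r = p / q`. The product rule for the divergence gives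
`div ((w ∘ r) F) = (w ∘ r) div F + D(w ∘ r)(F)`. Since `r` is the exponential of
`log p - log q`, its derivative is `Dr = r ⟪β, ·⟫`, so by the chain rule
`D(w ∘ r)(F) = w'(r) r q ‖β‖²`. Dividing by `q w(r) ‖β‖²` turns the two terms into the
compression index and the elasticity.
-/

/-- Divergence of a vector field on Euclidean space: the trace of the Jacobian,
`div F (x) = ∑ i ∂F_i/∂x_i (x)`. -/
noncomputable def diverg {d : ℕ} (F : EuclideanSpace ℝ (Fin d) → EuclideanSpace ℝ (Fin d))
    (x : EuclideanSpace ℝ (Fin d)) : ℝ :=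
  ∑ i : Fin d, fderiv ℝ F x (EuclideanSpace.single i (1 : ℝ)) i

/-- Product rule for the divergence of a scalar function times a vector field. -/
theorem diverg_smul {d : ℕ} {g : EuclideanSpace ℝ (Fin d) → ℝ}
    {F : EuclideanSpace ℝ (Fin d) → EuclideanSpace ℝ (Fin d)} {x : EuclideanSpace ℝ (Fin d)}
    (hg : DifferentiableAt ℝ g x) (hF : DifferentiableAt ℝ F x) :
    diverg (fun y => g y • F y) x = g x * diverg F x + fderiv ℝ g x (F x) := by
  have hsum : F x = ∑ i, F x i • EuclideanSpace.single i (1 : ℝ) := by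
    ext j
    simp [Pi.single_apply]
  have hlin : fderiv ℝ g x (F x)
      = ∑ i, fderiv ℝ g x (EuclideanSpace.single i (1 : ℝ)) * F x i := by
    conv_lhs => rw [hsum, map_sum]
    simp [mul_comm]
  rw [hlin]
  unfold diverg
  rw [fderiv_fun_smul hg hF, Finset.mul_sum, ← Finset.sum_add_distrib]
  simp

/-- The gradient of the logarithm of a positive `C²` function is differentiable. -/
theorem differentiable_gradient_log {d : ℕ} {p : EuclideanSpace ℝ (Fin d) → ℝ}
    (hp : ∀ x, 0 < p x) (hpc : ContDiff ℝ 2 p) :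
    Differentiable ℝ (gradient (fun z => Real.log (p z))) := by
  have h : ContDiff ℝ 2 (fun z => Real.log (p z)) := hpc.log fun z => (hp z).ne'
  have h1 : Differentiable ℝ (fderiv ℝ (fun z => Real.log (p z))) :=
    (h.fderiv_right (m := 1) (by norm_num)).differentiable (by norm_num)
  exact (InnerProductSpace.toDual ℝ
    (EuclideanSpace ℝ (Fin d))).symm.toContinuousLinearEquiv.differentiable.comp h1

/-- The density ratio satisfies `∇(p / q) = (p / q) (∇ log p - ∇ log q)`, as an identity of
linear forms. -/
theorem hasFDerivAt_ratio {d : ℕ} {p q : EuclideanSpace ℝ (Fin d) → ℝ}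
    (hp : ∀ x, 0 < p x) (hq : ∀ x, 0 < q x)
    (hpd : Differentiable ℝ p) (hqd : Differentiable ℝ q) (x : EuclideanSpace ℝ (Fin d)) :
    HasFDerivAt (fun y => p y / q y) ((p x / q x) • innerSL ℝ
      (gradient (fun z => Real.log (p z)) x - gradient (fun z => Real.log (q z)) x)) x := by
  have h1 := ((hpd x).log (hp x).ne').hasGradientAt.hasFDerivAt
  have h2 := ((hqd x).log (hq x).ne').hasGradientAt.hasFDerivAt
  have hexp : ∀ y, Real.exp (Real.log (p y) - Real.log (q y)) = p y / q y := fun y => by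
    rw [Real.exp_sub, Real.exp_log (hp y), Real.exp_log (hq y)]
  have h3 := (h1.sub h2).exp
  simp only [Pi.sub_apply, hexp] at h3
  rw [map_sub]
  exact h3

/-- Pointwise compression–elasticity identity (Proposition 2): at any point where
`β(x) ≠ 0` and `w(r(x)) ≠ 0`, with compression index `κ = −div(qβ)/(q‖β‖²)` and
elasticity `η(s) = s w'(s)/w(s)`, one has
`−div(q (w∘r) β) = q w(r) ‖β‖² (κ − η(r))`. -/
theorem stmt_5 (d : ℕ) (hd : 1 ≤ d)
    (p q : EuclideanSpace ℝ (Fin d) → ℝ) (w w' : ℝ → ℝ)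
    (hp : ∀ x, 0 < p x) (hq : ∀ x, 0 < q x)
    (hpc : ContDiff ℝ 2 p) (hqc : ContDiff ℝ 2 q)
    (hw : ∀ s : ℝ, 0 < s → HasDerivAt w (w' s) s)
    (x : EuclideanSpace ℝ (Fin d))
    (hβ : gradient (fun z => Real.log (p z)) x - gradient (fun z => Real.log (q z)) x ≠ 0)
    (hwx : w (p x / q x) ≠ 0) :
    -(diverg (fun y => (q y * w (p y / q y)) •
        (gradient (fun z => Real.log (p z)) y - gradient (fun z => Real.log (q z)) y)) x)
      = q x * w (p x / q x) *
          ‖gradient (fun z => Real.log (p z)) x - gradient (fun z => Real.log (q z)) x‖ ^ 2 *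
          ((-(diverg (fun y => q y •
              (gradient (fun z => Real.log (p z)) y - gradient (fun z => Real.log (q z)) y)) x)
            / (q x *
              ‖gradient (fun z => Real.log (p z)) x
                - gradient (fun z => Real.log (q z)) x‖ ^ 2))
           - ((p x / q x) * w' (p x / q x) / w (p x / q x))) := by
  have hrpos : 0 < p x / q x := div_pos (hp x) (hq x)
  have hqx := (hq x).ne'
  have hnorm : ‖gradient (fun z => Real.log (p z)) x
      - gradient (fun z => Real.log (q z)) x‖ ≠ 0 := norm_ne_zero_iff.mpr hβ
  have hpd : Differentiable ℝ p := hpc.differentiable (by norm_num)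
  have hqd : Differentiable ℝ q := hqc.differentiable (by norm_num)
  have hF : DifferentiableAt ℝ (fun y => q y •
      (gradient (fun z => Real.log (p z)) y - gradient (fun z => Real.log (q z)) y)) x :=
    (hqd x).smul ((differentiable_gradient_log hp hpc x).sub
      (differentiable_gradient_log hq hqc x))
  have hg := (hw _ hrpos).comp_hasFDerivAt x (hasFDerivAt_ratio hp hq hpd hqd x)
  have key := diverg_smul hg.differentiableAt hF
  rw [hg.fderiv] at key
  simp only [Function.comp_apply, smul_smul, smul_apply, map_smul,
    innerSL_apply_apply, real_inner_self_eq_norm_sq, smul_eq_mul] at key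
  simp only [mul_comm (q _) (w _)]
  rw [key]
  field_simp
  ring
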